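/- arXiv:1602.04159 — 5 statements merged into one kernel-verified Lean document; each statement's English description precedes it below -/
import Mathlib

section
/- Let r ≥ 2 and let Cl_r denote the Clifford algebra over ℝ of the negative-definite quadratic form Q(v) = -‖v‖² on Euclidean space ℝ^r, with canonical linear embedding ι : ℝ^r → Cl_r and standard orthonormal basis e_1, …, e_r. Let A be an element of the ℝ-linear span of the set {ι(e_i) * ι(e_j) : 1 ≤ i < j ≤ r}. Then A² = -1 (where 1 is the unit of Cl_r) if and only if there exist vectors v₁, v₂ ∈ ℝ^r with ‖v₁‖ = ‖v₂‖ = 1 and ⟨v₁, v₂⟩ = 0 such that A = ι(v₁) * ι(v₂). -/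
open scoped RealInnerProductSpace

theorem aux_swap {r : ℕ} (Q : QuadraticForm ℝ (EuclideanSpace ℝ (Fin r)))
    (hQ : ∀ v : EuclideanSpace ℝ (Fin r), Q v = -‖v‖ ^ 2)
    (a b : EuclideanSpace ℝ (Fin r)) :
    CliffordAlgebra.ι Q a * CliffordAlgebra.ι Q b
      = (-2 * ⟪a, b⟫) • (1 : CliffordAlgebra Q)
        - CliffordAlgebra.ι Q b * CliffordAlgebra.ι Q a := by
  have h := CliffordAlgebra.ι_mul_ι_add_swap (Q := Q) a b
  have h2 : QuadraticMap.polar Q a b = -2 * ⟪a, b⟫ := by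
    simp only [QuadraticMap.polar, hQ, norm_add_sq_real]
    ring
  rw [h2, Algebra.algebraMap_eq_smul_one] at h
  exact eq_sub_of_add_eq h

theorem aux_sq {r : ℕ} (Q : QuadraticForm ℝ (EuclideanSpace ℝ (Fin r)))
    (hQ : ∀ v : EuclideanSpace ℝ (Fin r), Q v = -‖v‖ ^ 2)
    (a : EuclideanSpace ℝ (Fin r)) :
    CliffordAlgebra.ι Q a * CliffordAlgebra.ι Q a
      = (-‖a‖ ^ 2) • (1 : CliffordAlgebra Q) := by
  rw [CliffordAlgebra.ι_sq_scalar, hQ, Algebra.algebraMap_eq_smul_one]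

theorem aux_comm {r : ℕ} (Q : QuadraticForm ℝ (EuclideanSpace ℝ (Fin r)))
    (hQ : ∀ v : EuclideanSpace ℝ (Fin r), Q v = -‖v‖ ^ 2)
    (a b c : EuclideanSpace ℝ (Fin r)) :
    CliffordAlgebra.ι Q a * CliffordAlgebra.ι Q b * CliffordAlgebra.ι Q c
      - CliffordAlgebra.ι Q c * (CliffordAlgebra.ι Q a * CliffordAlgebra.ι Q b)
      = CliffordAlgebra.ι Q ((-2 * ⟪b, c⟫) • a - (-2 * ⟪a, c⟫) • b) := by
  rw [mul_assoc, aux_swap Q hQ b c, mul_sub, ← mul_assoc, aux_swap Q hQ a c, map_sub, map_smul,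
    map_smul, sub_mul, mul_smul_comm, smul_mul_assoc, mul_one, one_mul, mul_assoc]
  abel

theorem aux_span {r : ℕ} (Q : QuadraticForm ℝ (EuclideanSpace ℝ (Fin r)))
    (hQ : ∀ v : EuclideanSpace ℝ (Fin r), Q v = -‖v‖ ^ 2)
    (e : Fin r → EuclideanSpace ℝ (Fin r))
    (he : ∀ i, e i = EuclideanSpace.single i (1 : ℝ))
    (A : CliffordAlgebra Q)
    (hA : A ∈ Submodule.span ℝ
      {x : CliffordAlgebra Q | ∃ i j : Fin r, i < j ∧
        x = CliffordAlgebra.ι Q (e i) * CliffordAlgebra.ι Q (e j)}) :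
    (∀ v, ∃ w, A * CliffordAlgebra.ι Q v - CliffordAlgebra.ι Q v * A = CliffordAlgebra.ι Q w) ∧
    ∑ k, CliffordAlgebra.ι Q (e k) *
      (A * CliffordAlgebra.ι Q (e k) - CliffordAlgebra.ι Q (e k) * A) = (4 : ℝ) • A := by
  induction hA using Submodule.span_induction with
  | mem x hx =>
    obtain ⟨i, j, hij, rfl⟩ := hx
    refine ⟨fun v => ⟨_, aux_comm Q hQ _ _ _⟩, ?_⟩
    have ho : ∀ a b, ⟪e a, e b⟫ = if b = a then (1 : ℝ) else 0 := by
      intro a b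
      simp [he, EuclideanSpace.inner_single_left, Pi.single_apply, eq_comm]
    have h0 := aux_swap Q hQ (e j) (e i)
    rw [ho, if_neg hij.ne] at h0
    simp only [mul_zero, zero_smul, zero_sub] at h0
    simp only [aux_comm Q hQ, map_sub, map_smul, mul_sub, Finset.sum_sub_distrib,
      mul_smul_comm]
    simp only [ho, mul_ite, mul_one, mul_zero, ite_smul, zero_smul, Finset.sum_ite_eq', Finset.sum_ite_eq,
      Finset.mem_univ, if_true, h0]
    module
  | zero => exact ⟨fun v => ⟨0, by simp⟩, by simp⟩
  | add x y _ _ hx hy =>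
    refine ⟨fun v => ?_, ?_⟩
    · obtain ⟨a, ha⟩ := hx.1 v
      obtain ⟨b, hb⟩ := hy.1 v
      refine ⟨a + b, ?_⟩
      rw [map_add, ← ha, ← hb]
      noncomm_ring
    · rw [smul_add, ← hx.2, ← hy.2, ← Finset.sum_add_distrib]
      refine Finset.sum_congr rfl fun k _ => ?_
      noncomm_ring
  | smul c x _ hx =>
    refine ⟨fun v => ?_, ?_⟩
    · obtain ⟨a, ha⟩ := hx.1 v
      refine ⟨c • a, ?_⟩
      rw [map_smul, ← ha, smul_sub, smul_mul_assoc, mul_smul_comm]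
    · rw [smul_comm, ← hx.2, Finset.smul_sum]
      refine Finset.sum_congr rfl fun k _ => ?_
      rw [smul_mul_assoc, mul_smul_comm, ← smul_sub, mul_smul_comm]

theorem aux_prod_sq {r : ℕ} (Q : QuadraticForm ℝ (EuclideanSpace ℝ (Fin r)))
    (hQ : ∀ v : EuclideanSpace ℝ (Fin r), Q v = -‖v‖ ^ 2)
    (a b : EuclideanSpace ℝ (Fin r)) (hab : ⟪a, b⟫ = 0) :
    (CliffordAlgebra.ι Q a * CliffordAlgebra.ι Q b) ^ 2
      = (-(‖a‖ ^ 2 * ‖b‖ ^ 2)) • (1 : CliffordAlgebra Q) := by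
  have h := aux_swap Q hQ a b
  rw [hab, mul_zero, zero_smul, zero_sub] at h
  calc _ = CliffordAlgebra.ι Q a * CliffordAlgebra.ι Q b *
        (CliffordAlgebra.ι Q a * CliffordAlgebra.ι Q b) := sq _
    _ = -(CliffordAlgebra.ι Q a * (CliffordAlgebra.ι Q b * CliffordAlgebra.ι Q b) *
        CliffordAlgebra.ι Q a) := by nth_rw 2 [h]; noncomm_ring
    _ = _ := by
      rw [aux_sq Q hQ b, mul_smul_comm, mul_one, smul_mul_assoc, aux_sq Q hQ a, smul_smul,
        ← neg_smul]
      congr 1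
      ring

theorem aux_inj {r : ℕ} (Q : QuadraticForm ℝ (EuclideanSpace ℝ (Fin r))) {a b : ℝ}
    (h : a • (1 : CliffordAlgebra Q) = b • 1) : a = b := by
  rw [← Algebra.algebraMap_eq_smul_one, ← Algebra.algebraMap_eq_smul_one] at h
  exact (algebraMap ℝ (CliffordAlgebra Q)).injective h

theorem stmt0
    (r : ℕ) (hr : 2 ≤ r)
    (Q : QuadraticForm ℝ (EuclideanSpace ℝ (Fin r)))
    (hQ : ∀ v : EuclideanSpace ℝ (Fin r), Q v = -‖v‖ ^ 2)
    (e : Fin r → EuclideanSpace ℝ (Fin r))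
    (he : ∀ i, e i = EuclideanSpace.single i (1 : ℝ))
    (A : CliffordAlgebra Q)
    (hA : A ∈ Submodule.span ℝ
      {x : CliffordAlgebra Q | ∃ i j : Fin r, i < j ∧
        x = CliffordAlgebra.ι Q (e i) * CliffordAlgebra.ι Q (e j)}) :
    A ^ 2 = -1 ↔
      ∃ v₁ v₂ : EuclideanSpace ℝ (Fin r),
        ‖v₁‖ = 1 ∧ ‖v₂‖ = 1 ∧ ⟪v₁, v₂⟫ = 0 ∧
          A = CliffordAlgebra.ι Q v₁ * CliffordAlgebra.ι Q v₂ := by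
  constructor
  · intro hsq
    obtain ⟨h1, h2⟩ := aux_span Q hQ e he A hA
    have hA2 : A * A = -1 := by rw [← sq, hsq]
    have key : ∃ v w, A * CliffordAlgebra.ι Q v - CliffordAlgebra.ι Q v * A
        = CliffordAlgebra.ι Q w ∧ w ≠ 0 := by
      by_contra! hcon
      have h0 : ∀ v, A * CliffordAlgebra.ι Q v - CliffordAlgebra.ι Q v * A = 0 := by
        intro v
        obtain ⟨w, hw⟩ := h1 v
        rw [hw, hcon v w hw, map_zero]
      simp only [h0, mul_zero, Finset.sum_const_zero] at h2
      have hA0 : A = 0 := by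
        have := smul_eq_zero.mp h2.symm
        exact this.resolve_left (by norm_num)
      rw [hA0, mul_zero] at hA2
      have : (0 : ℝ) • (1 : CliffordAlgebra Q) = (-1 : ℝ) • 1 := by
        rw [zero_smul, neg_smul, one_smul]; exact hA2
      have := aux_inj Q this
      norm_num at this
    obtain ⟨v, w, hvw, hw⟩ := key
    have hanti : A * CliffordAlgebra.ι Q w = -(CliffordAlgebra.ι Q w * A) := by
      rw [← hvw]
      have : ∀ x : CliffordAlgebra Q, A * (A * x - x * A) + (A * x - x * A) * A
        = (A * A) * x - x * (A * A) := by intro x; noncomm_ring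
      apply eq_neg_of_add_eq_zero_left
      rw [this, hA2]; simp
    -- normalise
    have hn : ‖w‖ ≠ 0 := norm_ne_zero_iff.mpr hw
    obtain ⟨u, hu⟩ := h1 w
    set y := (‖w‖⁻¹) • w with hy
    have hyn : ‖y‖ = 1 := by rw [hy, norm_smul]; simp [hn]
    have hyy : CliffordAlgebra.ι Q y * CliffordAlgebra.ι Q y = -1 := by
      rw [aux_sq Q hQ, hyn]; simp
    set x := (-(1/2) * ‖w‖⁻¹) • u with hx
    have hantiy : CliffordAlgebra.ι Q y * A = -(A * CliffordAlgebra.ι Q y) := by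
      rw [hy, map_smul, mul_smul_comm, smul_mul_assoc, hanti, smul_neg, neg_neg]
    have hAy : A * CliffordAlgebra.ι Q y = - CliffordAlgebra.ι Q x := by
      rw [hx, hy, map_smul, map_smul, ← hu, mul_smul_comm]
      have : CliffordAlgebra.ι Q w * A = -(A * CliffordAlgebra.ι Q w) := by rw [hanti, neg_neg]
      rw [this]
      module
    have hAxy : A = CliffordAlgebra.ι Q x * CliffordAlgebra.ι Q y := by
      have : A * CliffordAlgebra.ι Q y * CliffordAlgebra.ι Q y = -A := by
        rw [mul_assoc, hyy]; simp
      rw [hAy] at this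
      rw [← neg_inj, ← this, neg_mul]
    have hyx : CliffordAlgebra.ι Q y * CliffordAlgebra.ι Q x = -A := by
      have hxe : CliffordAlgebra.ι Q x = -(A * CliffordAlgebra.ι Q y) := by rw [hAy, neg_neg]
      rw [hxe, ← hantiy, ← mul_assoc, hyy]; simp
    have hort : ⟪x, y⟫ = 0 := by
      have h := aux_swap Q hQ x y
      rw [← hAxy, hyx, sub_neg_eq_add, right_eq_add] at h
      have h' : (-2 * ⟪x, y⟫) • (1 : CliffordAlgebra Q) = (0 : ℝ) • 1 := by rw [h, zero_smul]
      have := aux_inj Q h'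
      linarith
    refine ⟨x, y, ?_, hyn, hort, hAxy⟩
    have h := aux_prod_sq Q hQ x y hort
    rw [← hAxy, hsq, hyn] at h
    have h' : (-1 : ℝ) • (1 : CliffordAlgebra Q) = (-(‖x‖ ^ 2 * 1 ^ 2)) • 1 := by
      rw [← h]; simp
    have := aux_inj Q h'
    nlinarith [norm_nonneg x]
  · rintro ⟨a, b, ha, hb, hab, rfl⟩
    rw [aux_prod_sq Q hQ a b hab, ha, hb]
    simp
end

section
/- Let V be a finite-dimensional real inner product space, r ≥ 3, and let Cl⁰_r denote the even subalgebra of the Clifford algebra over ℝ of the negative-definite quadratic form Q(v) = -‖v‖² on ℝ^r, with canonical embedding ι and standard orthonormal basis e_1, …, e_r. Let φ : Cl⁰_r → End(V) be a unital ℝ-algebra homomorphism such that J_{ij} := φ(ι(e_i) * ι(e_j)) is a skew-adjoint endomorphism of V for all i ≠ j. Let κ ∈ ℝ and let R : V × V → End(V) be an ℝ-bilinear map satisfying, for all X, Y ∈ V, the identity [R(X,Y), J_{12}] = κ Σ_{s=3}^r ( ⟨J_{s1}X, Y⟩ J_{s2} − ⟨J_{s2}X, Y⟩ J_{s1} ),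 where [·,·] is the commutator of endomorphisms. Then, with S = J_{12}, for all X, Y ∈ V: [R(SX, SY), S] − S ∘ [R(SX, Y), S] − S ∘ [R(X, SY), S] − [R(X, Y), S] = 0. -/
open scoped RealInnerProductSpace

theorem stmt4
    (V : Type*) [NormedAddCommGroup V] [InnerProductSpace ℝ V] [FiniteDimensional ℝ V]
    (r : ℕ) (hr : 3 ≤ r)
    (Q : QuadraticForm ℝ (EuclideanSpace ℝ (Fin r)))
    (hQ : ∀ v : EuclideanSpace ℝ (Fin r), Q v = -‖v‖ ^ 2)
    (φ : CliffordAlgebra.even Q →ₐ[ℝ] Module.End ℝ V)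
    (e : Fin r → EuclideanSpace ℝ (Fin r))
    (he : ∀ i, e i = EuclideanSpace.single i (1 : ℝ))
    (J : Fin r → Fin r → Module.End ℝ V)
    (hJ : ∀ i j, J i j = φ ((CliffordAlgebra.even.ι Q).bilin (e i) (e j)))
    (hskew : ∀ i j, i ≠ j → ∀ x y : V, ⟪J i j x, y⟫ = -⟪x, J i j y⟫)
    (κ : ℝ) (R : V →ₗ[ℝ] V →ₗ[ℝ] Module.End ℝ V)
    (hR : ∀ X Y : V,
      ⁅R X Y, J ⟨0, by omega⟩ ⟨1, by omega⟩⁆ =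
        κ • ∑ s ∈ Finset.univ.filter (fun s : Fin r => 2 ≤ (s : ℕ)),
          (⟪J s ⟨0, by omega⟩ X, Y⟫ • J s ⟨1, by omega⟩
            - ⟪J s ⟨1, by omega⟩ X, Y⟫ • J s ⟨0, by omega⟩)) :
    ∀ X Y : V,
      (fun S : Module.End ℝ V =>
        ⁅R (S X) (S Y), S⁆ - S * ⁅R (S X) Y, S⁆ - S * ⁅R X (S Y), S⁆ - ⁅R X Y, S⁆)
        (J ⟨0, by omega⟩ ⟨1, by omega⟩) = 0 := by
  have hmul : ∀ i j k, J i j * J j k = -J i k := by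
    intro i j k
    rw [hJ, hJ, hJ, ← map_mul, (CliffordAlgebra.even.ι Q).contract_mid, hQ, he j]
    simp
  have hanti : ∀ i j, i ≠ j → J i j = -J j i := by
    intro i j hij
    have h1 := (CliffordAlgebra.even.ι Q).contract (e i + e j)
    have h2 : Q (e i + e j) = -2 := by
      rw [hQ, he, he, EuclideanSpace.norm_sq_eq]
      have : ∀ k : Fin r, ‖(EuclideanSpace.single i (1 : ℝ) + EuclideanSpace.single j (1 : ℝ)) k‖ ^ 2
          = (if k = i then 1 else 0) + (if k = j then 1 else 0) := by
        intro k
        by_cases hi : k = i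
        · subst hi; simp [hij]
        · by_cases hj : k = j
          · subst hj; simp [hi]
          · simp [hi, hj]
      rw [Finset.sum_congr rfl (fun k _ => this k), Finset.sum_add_distrib]
      simp; norm_num
    have h3 : ∀ k, J k k = -1 := by
      intro k
      rw [hJ, (CliffordAlgebra.even.ι Q).contract, hQ, he]
      simp
    rw [h2] at h1
    have h4 := congrArg φ h1
    simp only [map_add, LinearMap.add_apply, ← hJ, h3, AlgHom.commutes] at h4
    have h5 : (algebraMap ℝ (Module.End ℝ V)) (-2) = -1 + -1 := by
      rw [map_neg, map_ofNat]; norm_num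
    rw [h5] at h4
    rw [eq_neg_iff_add_eq_zero]
    have h6 : J i j + J j i = ((-1 + J j i) + (J i j + -1)) - (-1 + -1) := by abel
    rw [h6, h4, sub_self]
  intro X Y
  beta_reduce
  have h01 : (⟨0, by omega⟩ : Fin r) ≠ ⟨1, by omega⟩ := by simp
  have hs0 : ∀ s : Fin r, 2 ≤ (s : ℕ) → s ≠ ⟨0, by omega⟩ ∧ s ≠ ⟨1, by omega⟩ := by
    intro s hs
    constructor <;> (rintro rfl; simp at hs)
  rw [hR, hR, hR, hR]
  generalize (⟨0, by omega⟩ : Fin r) = o at *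
  generalize (⟨1, by omega⟩ : Fin r) = l at *
  simp only [mul_smul_comm, ← smul_sub, Finset.mul_sum, ← Finset.sum_sub_distrib]
  rw [Finset.sum_eq_zero, smul_zero]
  intro s hs
  obtain ⟨hso, hsl⟩ := hs0 s (Finset.mem_filter.mp hs).2
  have hAS : J s o * J o l = -J s l := hmul s o l
  have hBS : J s l * J o l = J s o := by
    rw [hanti o l h01, mul_neg, hmul, neg_neg]
  have hSA : J o l * J s o = J s l := by
    rw [hanti o l h01, hanti s o hso, neg_mul_neg, hmul, hanti s l hsl]
  have hSB : J o l * J s l = -J s o := by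
    rw [hanti s l hsl, mul_neg, hmul, neg_neg, hanti s o hso, neg_neg]
  have a1 : ∀ x, J s o (J o l x) = -J s l x := fun x => by
    simpa using LinearMap.congr_fun hAS x
  have a2 : ∀ x, J s l (J o l x) = J s o x := fun x => by
    simpa using LinearMap.congr_fun hBS x
  have a3 : ∀ x, J o l (J s o x) = J s l x := fun x => by
    simpa using LinearMap.congr_fun hSA x
  have a4 : ∀ x, J o l (J s l x) = -J s o x := fun x => by
    simpa using LinearMap.congr_fun hSB x
  have b : ∀ x y, ⟪x, J o l y⟫ = -⟪J o l x, y⟫ := fun x y => by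
    rw [hskew o l h01, neg_neg]
  simp only [b, a1, a2, a3, a4, inner_neg_left, map_neg, mul_sub, mul_smul_comm, hSA, hSB, neg_neg]
  module
end

section
/- Let V be a finite-dimensional real inner product space, r ≥ 3, and let Cl⁰_r denote the even subalgebra of the Clifford algebra over ℝ of the negative-definite quadratic form Q(v) = -‖v‖² on ℝ^r, with canonical embedding ι and standard orthonormal basis e_1, …, e_r. Let φ : Cl⁰_r → End(V) be a unital ℝ-algebra homomorphism such that J_{ij} := φ(ι(e_i) * ι(e_j)) is a skew-adjoint endomorphism of V for all i ≠ j. Let κ ∈ ℝ and let R : V × V → End(V) be an ℝ-bilinear map satisfying, for all X, Y ∈ V, the identity [R(X,Y), J_{12}] = κ Σ_{s=3}^r ( ⟨J_{s1}X, Y⟩ J_{s2} − ⟨J_{s2}X, Y⟩ J_{s1} ). Then for all X, Y ∈ V: [R(J_{12}X, J_{12}Y), J_{12}] = κ Σ_{s=3}^r ( −⟨J_{s1}X, Y⟩ J_{s2} + ⟨J_{s2}X, Y⟩ J_{s1} ). -/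
open scoped RealInnerProductSpace

theorem ring_aux1 {A : Type*} [Ring A] (a b s : A) (ha : a * a = -1) (hb : b * b = -1)
    (hbs : b * s = -(s * b)) (has : a * s = -(s * a)) :
    (a * b) * ((s * a) * (a * b)) = s * a := by
  calc (a * b) * ((s * a) * (a * b)) = a * (b * s) * (a * a) * b := by noncomm_ring
    _ = (a * s) * (b * b) := by rw [ha, hbs]; noncomm_ring
    _ = s * a := by rw [hb, has]; noncomm_ring

theorem ring_aux2 {A : Type*} [Ring A] (a b s : A) (ha : a * a = -1) (hb : b * b = -1)
    (hab : b * a = -(a * b)) (hbs : b * s = -(s * b)) (has : s * a = -(a * s)) :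
    (a * b) * ((s * b) * (a * b)) = s * b := by
  calc (a * b) * ((s * b) * (a * b)) = a * b * s * (b * a) * b := by noncomm_ring
    _ = - (a * b * (s * a) * (b * b)) := by rw [hab]; noncomm_ring
    _ = - (a * (b * a) * s) := by
      rw [hb, has]
      have : b * (a * s) = b * a * s := by noncomm_ring
      noncomm_ring
    _ = (a * a) * (b * s) := by rw [hab]; noncomm_ring
    _ = s * b := by rw [ha, hbs]; noncomm_ring

theorem stmt5
    (V : Type*) [NormedAddCommGroup V] [InnerProductSpace ℝ V] [FiniteDimensional ℝ V]
    (r : ℕ) (hr : 3 ≤ r)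
    (Q : QuadraticForm ℝ (EuclideanSpace ℝ (Fin r)))
    (hQ : ∀ v : EuclideanSpace ℝ (Fin r), Q v = -‖v‖ ^ 2)
    (φ : CliffordAlgebra.even Q →ₐ[ℝ] Module.End ℝ V)
    (e : Fin r → EuclideanSpace ℝ (Fin r))
    (he : ∀ i, e i = EuclideanSpace.single i (1 : ℝ))
    (J : Fin r → Fin r → Module.End ℝ V)
    (hJ : ∀ i j, J i j = φ ((CliffordAlgebra.even.ι Q).bilin (e i) (e j)))
    (hskew : ∀ i j, i ≠ j → ∀ x y : V, ⟪J i j x, y⟫ = -⟪x, J i j y⟫)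
    (κ : ℝ) (R : V →ₗ[ℝ] V →ₗ[ℝ] Module.End ℝ V)
    (hR : ∀ X Y : V,
      ⁅R X Y, J ⟨0, by omega⟩ ⟨1, by omega⟩⁆ =
        κ • ∑ s ∈ Finset.univ.filter (fun s : Fin r => 2 ≤ (s : ℕ)),
          (⟪J s ⟨0, by omega⟩ X, Y⟫ • J s ⟨1, by omega⟩
            - ⟪J s ⟨1, by omega⟩ X, Y⟫ • J s ⟨0, by omega⟩)) :
    ∀ X Y : V,
      ⁅R (J ⟨0, by omega⟩ ⟨1, by omega⟩ X) (J ⟨0, by omega⟩ ⟨1, by omega⟩ Y), J ⟨0, by omega⟩ ⟨1, by omega⟩⁆ =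
        κ • ∑ s ∈ Finset.univ.filter (fun s : Fin r => 2 ≤ (s : ℕ)),
          (-(⟪J s ⟨0, by omega⟩ X, Y⟫ • J s ⟨1, by omega⟩)
            + ⟪J s ⟨1, by omega⟩ X, Y⟫ • J s ⟨0, by omega⟩) := by
  have hsq : ∀ i, CliffordAlgebra.ι Q (e i) * CliffordAlgebra.ι Q (e i) = -1 := by
    intro i
    rw [CliffordAlgebra.ι_sq_scalar, hQ, he]
    simp
  have hanti : ∀ i j, i ≠ j → CliffordAlgebra.ι Q (e i) * CliffordAlgebra.ι Q (e j)
      = -(CliffordAlgebra.ι Q (e j) * CliffordAlgebra.ι Q (e i)) := by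
    intro i j hij
    rw [eq_neg_iff_add_eq_zero, CliffordAlgebra.ι_mul_ι_add_swap]
    have h0 : ⟪e i, e j⟫ = 0 := by
      rw [he, he]
      simp [EuclideanSpace.inner_single_left, hij]
    have : QuadraticMap.polar Q (e i) (e j) = 0 := by
      simp only [QuadraticMap.polar, hQ]
      rw [@norm_add_sq_real, h0]
      ring
    rw [this, map_zero]
  have key1 : ∀ a b s, a ≠ b → s ≠ a → s ≠ b → J a b * (J s a * J a b) = J s a := by
    intro a b s hab hsa hsb
    rw [hJ, hJ, ← map_mul, ← map_mul]
    congr 1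
    apply Subtype.ext
    exact ring_aux1 _ _ _ (hsq a) (hsq b) (hanti b s hsb.symm) (hanti a s hsa.symm)
  have key2 : ∀ a b s, a ≠ b → s ≠ a → s ≠ b → J a b * (J s b * J a b) = J s b := by
    intro a b s hab hsa hsb
    rw [hJ, hJ, ← map_mul, ← map_mul]
    congr 1
    apply Subtype.ext
    exact ring_aux2 _ _ _ (hsq a) (hsq b) (hanti b a hab.symm) (hanti b s hsb.symm)
      (hanti s a hsa)
  intro X Y
  rw [hR]
  congr 1
  apply Finset.sum_congr rfl
  intro s hs
  have hs2 : 2 ≤ (s : ℕ) := by simpa using hs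
  generalize ha : (⟨0, by omega⟩ : Fin r) = a
  generalize hb : (⟨1, by omega⟩ : Fin r) = b
  have hab : a ≠ b := by subst ha hb; simp
  have hsa : s ≠ a := by intro h; rw [h, ← ha] at hs2; simp at hs2
  have hsb : s ≠ b := by intro h; rw [h, ← hb] at hs2; simp at hs2
  have tr : ∀ T : Module.End ℝ V, J a b * (T * J a b) = T →
      ⟪T (J a b X), J a b Y⟫ = -⟪T X, Y⟫ := by
    intro T hT
    have h1 := hskew a b hab (T (J a b X)) Y
    have h2 : J a b (T (J a b X)) = T X := by
      simpa using LinearMap.congr_fun hT X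
    rw [h2] at h1
    linarith
  rw [tr _ (key1 a b s hab hsa hsb), tr _ (key2 a b s hab hsa hsb), neg_smul, neg_smul,
    sub_neg_eq_add]
end

section
/- Let V be a finite-dimensional real inner product space, r ≥ 3, and let Cl⁰_r denote the even subalgebra of the Clifford algebra over ℝ of the negative-definite quadratic form Q(v) = -‖v‖² on ℝ^r, with canonical embedding ι and standard orthonormal basis e_1, …, e_r. Let φ : Cl⁰_r → End(V) be a unital ℝ-algebra homomorphism such that J_{ij} := φ(ι(e_i) * ι(e_j)) is a skew-adjoint endomorphism of V for all i ≠ j. Let κ ∈ ℝ and let R : V × V → End(V) be an ℝ-bilinear map satisfying, for all X, Y ∈ V, the identity [R(X,Y), J_{12}] = κ Σ_{s=3}^r ( ⟨J_{s1}X, Y⟩ J_{s2} − ⟨J_{s2}X, Y⟩ J_{s1} ). Then for all X, Y ∈ V: −J_{12} ∘ [R(J_{12}X, Y), J_{12}] = κ Σ_{s=3}^r ( −⟨J_{s2}X, Y⟩ J_{s1} + ⟨J_{s1}X, Y⟩ J_{s2} ). -/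
open scoped RealInnerProductSpace

theorem stmt6
    (V : Type*) [NormedAddCommGroup V] [InnerProductSpace ℝ V] [FiniteDimensional ℝ V]
    (r : ℕ) (hr : 3 ≤ r)
    (Q : QuadraticForm ℝ (EuclideanSpace ℝ (Fin r)))
    (hQ : ∀ v : EuclideanSpace ℝ (Fin r), Q v = -‖v‖ ^ 2)
    (φ : CliffordAlgebra.even Q →ₐ[ℝ] Module.End ℝ V)
    (e : Fin r → EuclideanSpace ℝ (Fin r))
    (he : ∀ i, e i = EuclideanSpace.single i (1 : ℝ))
    (J : Fin r → Fin r → Module.End ℝ V)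
    (hJ : ∀ i j, J i j = φ ((CliffordAlgebra.even.ι Q).bilin (e i) (e j)))
    (hskew : ∀ i j, i ≠ j → ∀ x y : V, ⟪J i j x, y⟫ = -⟪x, J i j y⟫)
    (κ : ℝ) (R : V →ₗ[ℝ] V →ₗ[ℝ] Module.End ℝ V)
    (hR : ∀ X Y : V,
      ⁅R X Y, J ⟨0, by omega⟩ ⟨1, by omega⟩⁆ =
        κ • ∑ s ∈ Finset.univ.filter (fun s : Fin r => 2 ≤ (s : ℕ)),
          (⟪J s ⟨0, by omega⟩ X, Y⟫ • J s ⟨1, by omega⟩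
            - ⟪J s ⟨1, by omega⟩ X, Y⟫ • J s ⟨0, by omega⟩)) :
    ∀ X Y : V,
      -(J ⟨0, by omega⟩ ⟨1, by omega⟩ * ⁅R (J ⟨0, by omega⟩ ⟨1, by omega⟩ X) Y, J ⟨0, by omega⟩ ⟨1, by omega⟩⁆) =
        κ • ∑ s ∈ Finset.univ.filter (fun s : Fin r => 2 ≤ (s : ℕ)),
          (-(⟪J s ⟨1, by omega⟩ X, Y⟫ • J s ⟨0, by omega⟩)
            + ⟪J s ⟨0, by omega⟩ X, Y⟫ • J s ⟨1, by omega⟩) := by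
  have hQe : ∀ i, Q (e i) = -1 := by
    intro i
    rw [hQ, he]
    simp
  have hmul : ∀ i j k, J i j * J j k = -J i k := by
    intro i j k
    rw [hJ, hJ, hJ, ← map_mul, (CliffordAlgebra.even.ι Q).contract_mid, hQe]
    simp
  have hanti : ∀ i j, i ≠ j → J i j = -J j i := by
    intro i j hij
    rw [hJ, hJ, ← map_neg]
    congr 1
    apply Subtype.ext
    change CliffordAlgebra.ι Q (e i) * CliffordAlgebra.ι Q (e j)
      = -(CliffordAlgebra.ι Q (e j) * CliffordAlgebra.ι Q (e i))
    rw [eq_neg_iff_add_eq_zero, CliffordAlgebra.ι_mul_ι_add_swap]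
    have : QuadraticMap.polar Q (e i) (e j) = 0 := by
      have h0 : ⟪e i, e j⟫ = 0 := by
        rw [he, he]
        simp [EuclideanSpace.inner_single_left, hij]
      have h := norm_add_sq_real (e i) (e j)
      rw [h0] at h
      simp only [QuadraticMap.polar, hQ]
      linarith
    rw [this, map_zero]
  intro X Y
  rw [hR]
  generalize ha : (⟨0, by omega⟩ : Fin r) = a
  generalize hb : (⟨1, by omega⟩ : Fin r) = b
  have hab : a ≠ b := by
    rw [← ha, ← hb]
    simp
  rw [mul_smul_comm, ← smul_neg, Finset.mul_sum, ← Finset.sum_neg_distrib]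
  congr 1
  apply Finset.sum_congr rfl
  intro s hs
  have hs2 : 2 ≤ (s : ℕ) := by simpa using hs
  have hsa : s ≠ a := by
    rintro rfl
    rw [← ha] at hs2
    simp at hs2
  have hsb : s ≠ b := by
    rintro rfl
    rw [← hb] at hs2
    simp at hs2
  have h1 : J s a * J a b = -J s b := hmul s a b
  have h2 : J s b * J a b = J s a := by
    rw [hanti a b hab, mul_neg, hmul, neg_neg]
  have h3 : J a b * J s b = -J s a := by
    rw [hanti s b hsb, mul_neg, hmul, neg_neg, hanti a s hsa.symm]
  have h4 : J a b * J s a = J s b := by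
    rw [hanti a b hab, hanti s a hsa, neg_mul_neg, hmul, hanti s b hsb]
  have h1' : J s a (J a b X) = -J s b X := by
    rw [← Module.End.mul_apply, h1, LinearMap.neg_apply]
  have h2' : J s b (J a b X) = J s a X := by
    rw [← Module.End.mul_apply, h2]
  rw [h1', h2', mul_sub, mul_smul_comm, mul_smul_comm, h3, h4, inner_neg_left]
  module
end

section
/- Let V be a finite-dimensional real inner product space, r ≥ 3, and let Cl⁰_r denote the even subalgebra of the Clifford algebra over ℝ of the negative-definite quadratic form Q(v) = -‖v‖² on ℝ^r, with canonical embedding ι and standard orthonormal basis e_1, …, e_r. Let φ : Cl⁰_r → End(V) be a unital ℝ-algebra homomorphism such that J_{ij} := φ(ι(e_i) * ι(e_j)) is a skew-adjoint endomorphism of V for all i ≠ j. Let κ ∈ ℝ and let R : V × V → End(V) be an ℝ-bilinear map satisfying, for all X, Y ∈ V, the identity [R(X,Y), J_{12}] = κ Σ_{s=3}^r ( ⟨J_{s1}X, Y⟩ J_{s2} − ⟨J_{s2}X, Y⟩ J_{s1} ). Then for all X, Y ∈ V: [R(X, J_{12}Y), J_{12}] = J_{12} ∘ [R(X,Y), J_{12}].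 -/
open scoped RealInnerProductSpace

theorem stmt10
    (V : Type*) [NormedAddCommGroup V] [InnerProductSpace ℝ V] [FiniteDimensional ℝ V]
    (r : ℕ) (hr : 3 ≤ r)
    (Q : QuadraticForm ℝ (EuclideanSpace ℝ (Fin r)))
    (hQ : ∀ v : EuclideanSpace ℝ (Fin r), Q v = -‖v‖ ^ 2)
    (φ : CliffordAlgebra.even Q →ₐ[ℝ] Module.End ℝ V)
    (e : Fin r → EuclideanSpace ℝ (Fin r))
    (he : ∀ i, e i = EuclideanSpace.single i (1 : ℝ))
    (J : Fin r → Fin r → Module.End ℝ V)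
    (hJ : ∀ i j, J i j = φ ((CliffordAlgebra.even.ι Q).bilin (e i) (e j)))
    (hskew : ∀ i j, i ≠ j → ∀ x y : V, ⟪J i j x, y⟫ = -⟪x, J i j y⟫)
    (κ : ℝ) (R : V →ₗ[ℝ] V →ₗ[ℝ] Module.End ℝ V)
    (hR : ∀ X Y : V,
      ⁅R X Y, J ⟨0, by omega⟩ ⟨1, by omega⟩⁆ =
        κ • ∑ s ∈ Finset.univ.filter (fun s : Fin r => 2 ≤ (s : ℕ)),
          (⟪J s ⟨0, by omega⟩ X, Y⟫ • J s ⟨1, by omega⟩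
            - ⟪J s ⟨1, by omega⟩ X, Y⟫ • J s ⟨0, by omega⟩)) :
    ∀ X Y : V,
      ⁅R X (J ⟨0, by omega⟩ ⟨1, by omega⟩ Y), J ⟨0, by omega⟩ ⟨1, by omega⟩⁆ =
        J ⟨0, by omega⟩ ⟨1, by omega⟩ * ⁅R X Y, J ⟨0, by omega⟩ ⟨1, by omega⟩⁆ := by
  have hq : ∀ i, Q (e i) = -1 := by
    intro i
    rw [hQ, he]
    simp
  have hcontr : ∀ i j k, J i j * J j k = -J i k := by
    intro i j k
    rw [hJ, hJ, hJ, ← map_mul, (CliffordAlgebra.even.ι Q).contract_mid, hq, map_smul, neg_one_smul]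
  have hanti : ∀ i j, i ≠ j → J i j = -J j i := by
    intro i j hij
    rw [hJ, hJ, ← map_neg]
    congr 1
    apply Subtype.ext
    change CliffordAlgebra.ι Q (e i) * CliffordAlgebra.ι Q (e j)
      = -(CliffordAlgebra.ι Q (e j) * CliffordAlgebra.ι Q (e i))
    rw [eq_neg_iff_add_eq_zero, CliffordAlgebra.ι_mul_ι_add_swap]
    have : QuadraticMap.polar Q (e i) (e j) = 0 := by
      have h0 : ⟪e i, e j⟫ = 0 := by
        rw [he, he]
        simp [EuclideanSpace.inner_single_left, hij]
      have h1 := norm_add_sq_real (e i) (e j)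
      rw [QuadraticMap.polar, hQ, hQ, hQ]
      rw [h0] at h1
      linarith
    rw [this, map_zero]
  intro X Y
  rw [hR, hR, mul_smul_comm, Finset.mul_sum]
  congr 1
  apply Finset.sum_congr rfl
  intro s hs
  have hs2 : 2 ≤ (s : ℕ) := by simpa using hs
  generalize ha : (⟨0, by omega⟩ : Fin r) = a
  generalize hb : (⟨1, by omega⟩ : Fin r) = b
  have hab : a ≠ b := by
    rw [← ha, ← hb]; simp
  have hsa : s ≠ a := by
    rw [← ha]; intro h; rw [h] at hs2; simp at hs2
  have hsb : s ≠ b := by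
    rw [← hb]; intro h; rw [h] at hs2; simp at hs2
  have m1 : J a b * J s a = J s b := by
    rw [hanti a b hab, hanti s a hsa, neg_mul_neg, hcontr, ← hanti s b hsb]
  have m2 : J a b * J s b = -J s a := by
    rw [hanti s b hsb, mul_neg, hcontr, hanti s a hsa]
  have i1 : ⟪J s a X, J a b Y⟫ = -⟪J s b X, Y⟫ := by
    rw [← m1, Module.End.mul_apply, hskew a b hab, neg_neg]
  have i2 : ⟪J s b X, J a b Y⟫ = ⟪J s a X, Y⟫ := by
    have h := hskew a b hab (J s b X) Y
    rw [← Module.End.mul_apply, m2, LinearMap.neg_apply, inner_neg_left] at h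
    linarith
  rw [i1, i2, mul_sub, mul_smul_comm, mul_smul_comm, m1, m2, smul_neg, neg_smul]
  abel
end
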